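/- In the low privacy regime, the optimal cost satisfies V*(ε) = 2^{1/3}·Δ·e^{−ε/3} + (Δ/2^{1/3})·e^{−2ε/3} + o(e^{−2ε/3}) as ε → +∞; precisely, lim_{ε→+∞} e^{ε/3}·V*(ε) = 2^{1/3}·Δ and lim_{ε→+∞} e^{2ε/3}·(V*(ε) − 2^{1/3}·Δ·e^{−ε/3}) = Δ/2^{1/3}. -/

import Mathlib

open MeasureTheory Real Filter
open scoped ENNReal Topology

noncomputable section

/-- The ℓ¹ norm on ℝ². -/
def l1 (x : ℝ × ℝ) : ℝ := |x.1| + |x.2|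

/-- The ε-differential-privacy constraint on a measure on ℝ² with sensitivity Δ. -/
def DPC (ε Δ : ℝ) (μ : Measure (ℝ × ℝ)) : Prop :=
  ∀ S : Set (ℝ × ℝ), MeasurableSet S → ∀ t : ℝ × ℝ, l1 t ≤ Δ →
    μ S ≤ ENNReal.ofReal (Real.exp ε) * μ ((· + t) '' S)

/-- Expected ℓ¹ cost of a noise distribution. -/
def cost (μ : Measure (ℝ × ℝ)) : ℝ≥0∞ := ∫⁻ x, ENNReal.ofReal (l1 x) ∂μ

/-- The optimal cost V*(ε): the infimum of the expected ℓ¹ cost over all probability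
measures on ℝ² satisfying the ε-differential-privacy constraint. -/
def Vstar (Δ ε : ℝ) : ℝ≥0∞ :=
  ⨅ (μ : Measure (ℝ × ℝ)) (_ : IsProbabilityMeasure μ ∧ DPC ε Δ μ), cost μ

lemma lint_poly (p : ℝ → ℝ) (hp : Continuous p) (a b : ℝ) (hab : a ≤ b)
    (h0 : ∀ x ∈ Set.Ioc a b, 0 ≤ p x) :
    ∫⁻ x in Set.Ioc a b, ENNReal.ofReal (p x) = ENNReal.ofReal (∫ x in a..b, p x) := by
  rw [intervalIntegral.integral_of_le hab]
  rw [ofReal_integral_eq_lintegral_ofReal]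
  · exact (hp.integrableOn_Icc (a := a) (b := b)).mono_set Set.Ioc_subset_Icc_self
  · exact (ae_restrict_iff' measurableSet_Ioc).2 (Eventually.of_forall h0)

lemma int_quad (a b v : ℝ) : ∫ r in a..b, r * (r - v) = (b^3 - a^3)/3 - v * (b^2-a^2)/2 := by
  have : ∀ r : ℝ, r * (r - v) = r^2 - v * r := by intro r; ring
  simp only [this]
  rw [intervalIntegral.integral_sub (Continuous.intervalIntegrable (by fun_prop) _ _) (Continuous.intervalIntegrable (by fun_prop) _ _)]
  rw [intervalIntegral.integral_const_mul]
  simp [integral_pow]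
  ring

lemma int_quad' (a b v : ℝ) : ∫ r in a..b, r * (v - r) = v * (b^2-a^2)/2 - (b^3 - a^3)/3 := by
  have : ∀ r : ℝ, r * (v - r) = v * r - r^2 := by intro r; ring
  simp only [this]
  rw [intervalIntegral.integral_sub (Continuous.intervalIntegrable (by fun_prop) _ _) (Continuous.intervalIntegrable (by fun_prop) _ _)]
  rw [intervalIntegral.integral_const_mul]
  simp [integral_pow]
  ring

/-- The one-dimensional inequality along a ray. -/
lemma ray_ineq (D v σ b : ℝ) (hσ : 0 ≤ σ) (hσv : σ ≤ v) (hvD : v ≤ D) (hb : 0 < b)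
    (hA : v^3/6 - v*σ^2/2 + σ^3/3 ≤ b * ((D-v)^3/3 + v*(D-v)^2/2))
    (hAB : v^3/6 ≤ b * ((D-σ)^3/3 + v*(D-σ)^2/2))
    (h : ℝ → ℝ≥0∞) (hfin : ∀ r, h r ≠ ⊤)
    (hdp : ∀ r r' : ℝ, 0 ≤ r → 0 ≤ r' → |r - r'| ≤ D → ENNReal.ofReal b * h r ≤ h r') :
    ∫⁻ r in Set.Ioi (0:ℝ), ENNReal.ofReal (r * (v - r)) * h r ≤
      ∫⁻ r in Set.Ioi (0:ℝ), ENNReal.ofReal (r * (r - v)) * h r := by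
  have hv : 0 ≤ v := hσ.trans hσv
  set I : ℝ≥0∞ := ⨅ r ∈ Set.Icc v D, h r with hI
  set J : ℝ≥0∞ := ⨅ r ∈ Set.Icc v (D + v - σ), h r with hJ
  have hJI : J ≤ I := by
    apply biInf_mono
    intro r hr
    exact ⟨hr.1, by linarith [hr.2]⟩
  have hIfin : I ≠ ⊤ := ne_top_of_le_ne_top (hfin v) (iInf₂_le v ⟨le_rfl, hvD⟩)
  have hJfin : J ≠ ⊤ := ne_top_of_le_ne_top hIfin hJI
  have hb0 : ENNReal.ofReal b ≠ 0 := by simpa using hb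
  have hbT : ENNReal.ofReal b ≠ ⊤ := ENNReal.ofReal_ne_top
  -- upper bound
  have e1 : ∀ r ∈ Set.Ioc 0 (v-σ), ENNReal.ofReal b * h r ≤ I := by
    intro r hr
    refine le_iInf₂ fun r' hr' => hdp r r' hr.1.le (hv.trans hr'.1) ?_
    rw [abs_le]; constructor <;> linarith [hr.1, hr.2, hr'.1, hr'.2]
  have e2 : ∀ r ∈ Set.Ioc (v-σ) v, ENNReal.ofReal b * h r ≤ J := by
    intro r hr
    refine le_iInf₂ fun r' hr' => hdp r r' (by linarith [hr.1]) (hv.trans hr'.1) ?_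
    rw [abs_le]; constructor <;> linarith [hr.1, hr.2, hr'.1, hr'.2]
  have U : ENNReal.ofReal b * ∫⁻ r in Set.Ioi (0:ℝ), ENNReal.ofReal (r * (v - r)) * h r ≤
      I * ENNReal.ofReal (∫ r in (0:ℝ)..(v-σ), r * (v - r)) +
      J * ENNReal.ofReal (∫ r in (v-σ)..v, r * (v - r)) := by
    rw [← lint_poly _ (by fun_prop) _ _ (by linarith)
        (fun x hx => mul_nonneg hx.1.le (by linarith [hx.2])),
      ← lint_poly _ (by fun_prop) _ _ (by linarith)
        (fun x hx => mul_nonneg (by linarith [hx.1]) (by linarith [hx.2])),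
      ← lintegral_const_mul' _ _ hbT, ← lintegral_const_mul' _ _ hIfin,
      ← lintegral_const_mul' _ _ hJfin]
    have hsplit : Set.Ioi (0:ℝ) = Set.Ioc 0 (v-σ) ∪ (Set.Ioc (v-σ) v ∪ Set.Ioi v) := by
      rw [Set.Ioc_union_Ioi_eq_Ioi (by linarith), Set.Ioc_union_Ioi_eq_Ioi (by linarith)]
    rw [hsplit]
    refine (lintegral_union_le _ _ _).trans (add_le_add ?_ ?_)
    · refine setLIntegral_mono' measurableSet_Ioc fun r hr => ?_
      rw [mul_left_comm, mul_comm I]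
      gcongr
      exact e1 r hr
    · refine (lintegral_union_le _ _ _).trans ?_
      rw [← add_zero (∫⁻ _ in _, J * _)]
      refine add_le_add ?_ ?_
      · refine setLIntegral_mono' measurableSet_Ioc fun r hr => ?_
        rw [mul_left_comm, mul_comm J]
        gcongr
        exact e2 r hr
      · rw [nonpos_iff_eq_zero]
        rw [setLIntegral_congr_fun (g := fun _ => 0) measurableSet_Ioi]
        · simp
        · intro r hr
          have hr : v < r := hr
          have h3 : r * (v - r) ≤ 0 := mul_nonpos_of_nonneg_of_nonpos (by linarith) (by linarith)
          simp only
          rw [ENNReal.ofReal_of_nonpos h3]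
          simp
  have L : I * ENNReal.ofReal (∫ r in v..D, r * (r - v)) +
      J * ENNReal.ofReal (∫ r in D..(D+v-σ), r * (r - v)) ≤
      ∫⁻ r in Set.Ioi (0:ℝ), ENNReal.ofReal (r * (r - v)) * h r := by
    rw [← lint_poly _ (by fun_prop) _ _ (by linarith)
        (fun x hx => mul_nonneg (by linarith [hx.1]) (by linarith [hx.1])),
      ← lint_poly _ (by fun_prop) _ _ (by linarith)
        (fun x hx => mul_nonneg (by linarith [hx.1]) (by linarith [hx.1])),
       ← lintegral_const_mul' _ _ hIfin,
      ← lintegral_const_mul' _ _ hJfin]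
    have hsub : Set.Ioc v D ∪ Set.Ioc D (D+v-σ) ⊆ Set.Ioi 0 := by
      intro r hr
      simp only [Set.mem_union, Set.mem_Ioc, Set.mem_Ioi] at hr ⊢
      rcases hr with hr | hr <;> linarith
    refine le_trans ?_ (lintegral_mono_set hsub)
    rw [lintegral_union measurableSet_Ioc (Set.Ioc_disjoint_Ioc_of_le le_rfl)]
    refine add_le_add ?_ ?_
    · refine setLIntegral_mono' measurableSet_Ioc fun r hr => ?_
      rw [mul_comm I]
      gcongr
      exact iInf₂_le r ⟨hr.1.le, hr.2⟩
    · refine setLIntegral_mono' measurableSet_Ioc fun r hr => ?_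
      rw [mul_comm J]
      gcongr
      exact iInf₂_le r ⟨by linarith [hr.1], hr.2⟩
  refine (ENNReal.mul_le_mul_iff_right hb0 hbT).1 (U.trans (le_trans ?_ (mul_le_mul_right L _)))
  have nA : 0 ≤ ∫ r in (0:ℝ)..(v-σ), r * (v - r) :=
    intervalIntegral.integral_nonneg (by linarith) fun x hx => mul_nonneg hx.1 (by linarith [hx.2])
  have nB : 0 ≤ ∫ r in (v-σ)..v, r * (v - r) :=
    intervalIntegral.integral_nonneg (by linarith) fun x hx =>
      mul_nonneg (by linarith [hx.1]) (by linarith [hx.2])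
  have nP : 0 ≤ ∫ r in v..D, r * (r - v) :=
    intervalIntegral.integral_nonneg (by linarith) fun x hx =>
      mul_nonneg (by linarith [hx.1]) (by linarith [hx.1])
  have nQ : 0 ≤ ∫ r in D..(D+v-σ), r * (r - v) :=
    intervalIntegral.integral_nonneg (by linarith) fun x hx =>
      mul_nonneg (by linarith [hx.1]) (by linarith [hx.1])
  have kA : (∫ r in (0:ℝ)..(v-σ), r * (v - r)) ≤ b * ∫ r in v..D, r * (r - v) := by
    rw [int_quad, int_quad']
    convert hA using 1 <;> ring
  have kAB : (∫ r in (0:ℝ)..(v-σ), r * (v - r)) + (∫ r in (v-σ)..v, r * (v - r)) ≤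
      b * ((∫ r in v..D, r * (r - v)) + ∫ r in D..(D+v-σ), r * (r - v)) := by
    rw [int_quad, int_quad', int_quad, int_quad']
    convert hAB using 1 <;> ring
  generalize (∫ r in (0:ℝ)..(v-σ), r * (v - r)) = A at *
  generalize (∫ r in (v-σ)..v, r * (v - r)) = B at *
  generalize (∫ r in v..D, r * (r - v)) = P at *
  generalize (∫ r in D..(D+v-σ), r * (r - v)) = Q at *
  have hIJ' : J.toReal ≤ I.toReal := ENNReal.toReal_mono hIfin hJI
  rw [← ENNReal.ofReal_toReal hIfin, ← ENNReal.ofReal_toReal hJfin]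
  have nI : 0 ≤ I.toReal := ENNReal.toReal_nonneg
  have nJ : 0 ≤ J.toReal := ENNReal.toReal_nonneg
  generalize I.toReal = i at *
  generalize J.toReal = j at *
  rw [← ENNReal.ofReal_mul nI, ← ENNReal.ofReal_mul nI, ← ENNReal.ofReal_mul nJ,
    ← ENNReal.ofReal_mul nJ, ← ENNReal.ofReal_add (by positivity) (by positivity),
    ← ENNReal.ofReal_add (by positivity) (by positivity), ← ENNReal.ofReal_mul hb.le]
  apply ENNReal.ofReal_le_ofReal
  nlinarith [mul_nonneg (sub_nonneg.2 hIJ') (sub_nonneg.2 kA), mul_nonneg nJ (sub_nonneg.2 kAB)]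

/-- Consequence : mean radius lower bound along a ray. -/
lemma ray_ineq' (v : ℝ) (hv : 0 ≤ v) (h : ℝ → ℝ≥0∞) (hm : Measurable h)
    (H : ∫⁻ r in Set.Ioi (0:ℝ), ENNReal.ofReal (r * (v - r)) * h r ≤
      ∫⁻ r in Set.Ioi (0:ℝ), ENNReal.ofReal (r * (r - v)) * h r) :
    ENNReal.ofReal v * ∫⁻ r in Set.Ioi (0:ℝ), ENNReal.ofReal r * h r ≤
      ∫⁻ r in Set.Ioi (0:ℝ), ENNReal.ofReal r * (ENNReal.ofReal r * h r) := by
  have a1 : ENNReal.ofReal v * ∫⁻ r in Set.Ioi (0:ℝ), ENNReal.ofReal r * h r =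
      (∫⁻ r in Set.Ioi (0:ℝ), ENNReal.ofReal (r * min r v) * h r) +
      ∫⁻ r in Set.Ioi (0:ℝ), ENNReal.ofReal (r * (v - r)) * h r := by
    rw [← lintegral_const_mul' _ _ ENNReal.ofReal_ne_top, ← lintegral_add_left (by fun_prop)]
    refine setLIntegral_congr_fun measurableSet_Ioi fun r hr => ?_
    have hr : 0 < r := hr
    rw [← mul_assoc, ← ENNReal.ofReal_mul hv, ← add_mul]
    congr 1
    rcases le_total r v with hh | hh
    · rw [min_eq_left hh, ← ENNReal.ofReal_add (by positivity) (mul_nonneg hr.le (by linarith))]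
      congr 1; ring
    · rw [min_eq_right hh, ENNReal.ofReal_of_nonpos (p := r * (v - r)) (by nlinarith), add_zero, mul_comm]
  have a2 : ∫⁻ r in Set.Ioi (0:ℝ), ENNReal.ofReal r * (ENNReal.ofReal r * h r) =
      (∫⁻ r in Set.Ioi (0:ℝ), ENNReal.ofReal (r * min r v) * h r) +
      ∫⁻ r in Set.Ioi (0:ℝ), ENNReal.ofReal (r * (r - v)) * h r := by
    rw [← lintegral_add_left (by fun_prop)]
    refine setLIntegral_congr_fun measurableSet_Ioi fun r hr => ?_
    have hr : 0 < r := hr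
    rw [← mul_assoc, ← ENNReal.ofReal_mul hr.le, ← add_mul]
    congr 1
    rcases le_total r v with hh | hh
    · rw [min_eq_left hh, ENNReal.ofReal_of_nonpos (p := r * (r - v)) (by nlinarith), add_zero]
    · rw [min_eq_right hh, ← ENNReal.ofReal_add (by positivity) (mul_nonneg hr.le (by linarith))]
      congr 1; ring
  rw [a1, a2]
  gcongr
/-- Polar coordinates adapted to the l1 norm. -/
lemma l1polar : ∃ (ν : Measure ℝ) (u : ℝ → ℝ × ℝ), Measurable u ∧ (∀ θ, l1 (u θ) = 1) ∧
    ν Set.univ ≠ 0 ∧ ν Set.univ ≠ ⊤ ∧ ∀ F : ℝ × ℝ → ℝ≥0∞, Measurable F →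
      ∫⁻ x, F x = ∫⁻ θ, (∫⁻ ρ in Set.Ioi (0:ℝ), ENNReal.ofReal ρ * F (ρ * (u θ).1, ρ * (u θ).2)) ∂ν := by
  set n : ℝ → ℝ := fun θ => |Real.cos θ| + |Real.sin θ| with hn
  have hnc : Continuous n := by fun_prop
  have hn1 : ∀ θ, 1 ≤ n θ := by
    intro θ
    have := Real.sin_sq_add_cos_sq θ
    have h1 := abs_nonneg (Real.cos θ)
    have h2 := abs_nonneg (Real.sin θ)
    simp only [hn]
    nlinarith [sq_abs (Real.cos θ), sq_abs (Real.sin θ), mul_nonneg h1 h2]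
  set w : ℝ → ℝ≥0∞ := fun θ => ENNReal.ofReal ((n θ)⁻¹ ^ 2) with hw
  have hwm : Measurable w := by fun_prop
  set ν : Measure ℝ := (volume.restrict (Set.Ioo (-π) π)).withDensity w with hν
  set u : ℝ → ℝ × ℝ := fun θ => ((n θ)⁻¹ * Real.cos θ, (n θ)⁻¹ * Real.sin θ) with hu
  have hum : Measurable u := by fun_prop
  have key : ∀ F : ℝ × ℝ → ℝ≥0∞, Measurable F →
      ∫⁻ x, F x = ∫⁻ θ, (∫⁻ ρ in Set.Ioi (0:ℝ), ENNReal.ofReal ρ * F (ρ * (u θ).1, ρ * (u θ).2)) ∂ν := by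
    intro F hF
    have hmF : Measurable fun θ => ∫⁻ ρ in Set.Ioi (0:ℝ), ENNReal.ofReal ρ * F (ρ * (u θ).1, ρ * (u θ).2) := by
      apply Measurable.lintegral_prod_right' (f := fun p : ℝ × ℝ => ENNReal.ofReal p.2 * F (p.2 * (u p.1).1, p.2 * (u p.1).2))
      fun_prop
    rw [hν, lintegral_withDensity_eq_lintegral_mul _ hwm hmF, ← lintegral_comp_polarCoord_symm]
    simp only [polarCoord_target, polarCoord_symm_apply, smul_eq_mul]
    rw [Measure.volume_eq_prod, ← Measure.prod_restrict, lintegral_prod_symm _ (by fun_prop)]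
    refine lintegral_congr fun θ => ?_
    simp only [Pi.mul_apply]
    have hp : 0 < n θ := by linarith [hn1 θ]
    have hi : 0 < (n θ)⁻¹ := by positivity
    have sub : ∀ G : ℝ → ℝ≥0∞, Measurable G →
        ∫⁻ r in Set.Ioi (0:ℝ), G r = ENNReal.ofReal (n θ)⁻¹ * ∫⁻ r in Set.Ioi (0:ℝ), G ((n θ)⁻¹ * r) := by
      intro G hG
      rw [← lintegral_indicator measurableSet_Ioi, ← lintegral_indicator measurableSet_Ioi]
      conv_lhs => rw [← Real.smul_map_volume_mul_left hi.ne']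
      rw [lintegral_smul_measure, lintegral_map (hG.indicator measurableSet_Ioi) (by fun_prop), abs_of_pos hi]
      congr 1
      refine lintegral_congr fun r => ?_
      simp only [Set.indicator, Set.mem_Ioi]
      simp [hi]
    rw [sub _ (by fun_prop), hw]
    simp only
    rw [pow_two, ENNReal.ofReal_mul hi.le, mul_assoc]
    congr 1
    rw [← lintegral_const_mul' _ _ ENNReal.ofReal_ne_top]
    refine lintegral_congr fun r => ?_
    rw [ENNReal.ofReal_mul hi.le, mul_assoc]
    simp only [hu]
    congr 4 <;> ring
  refine ⟨ν, u, hum, ?_, ?_, ?_, key⟩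
  · intro θ
    have hp : 0 < n θ := by linarith [hn1 θ]
    have hi : 0 < (n θ)⁻¹ := by positivity
    simp only [l1, hu]
    rw [abs_mul, abs_mul, abs_of_pos hi, ← mul_add]
    exact inv_mul_cancel₀ hp.ne'
  · intro h0
    have := key (fun _ => 1) measurable_const
    rw [Measure.measure_univ_eq_zero.1 h0] at this
    simp at this
  · rw [hν, withDensity_apply _ MeasurableSet.univ, Measure.restrict_univ]
    refine ne_top_of_le_ne_top ?_ (lintegral_mono (g := fun _ => 1) ?_)
    · simp
    · intro θ
      simp only [hw]
      rw [ENNReal.ofReal_le_one]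
      have : (n θ)⁻¹ ≤ 1 := inv_le_one_of_one_le₀ (hn1 θ)
      have hp : 0 < n θ := by linarith [hn1 θ]
      have hi : 0 < (n θ)⁻¹ := by positivity
      nlinarith

lemma measurable_l1 : Measurable l1 := by unfold l1; fun_prop

/-- Lower bound on the cost of any private measure. -/
lemma cost_lower (ε D v σ : ℝ) (hσ : 0 ≤ σ) (hσv : σ ≤ v) (hvD : v ≤ D)
    (hA : v^3/6 - v*σ^2/2 + σ^3/3 ≤ Real.exp (-ε) * ((D-v)^3/3 + v*(D-v)^2/2))
    (hAB : v^3/6 ≤ Real.exp (-ε) * ((D-σ)^3/3 + v*(D-σ)^2/2))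
    (μ : Measure (ℝ × ℝ)) [IsProbabilityMeasure μ] (hμ : DPC ε D μ) :
    ENNReal.ofReal v ≤ cost μ := by
  obtain ⟨ν, u, hum, hu1, -, -, hpol⟩ := l1polar
  have hv : 0 ≤ v := hσ.trans hσv
  apply ENNReal.le_of_forall_pos_le_add
  intro δ' hδ' _
  set δ : ℝ := (δ' : ℝ) / 2 with hδdef
  have hδ : 0 < δ := by positivity
  set T : Set ((ℝ × ℝ) × (ℝ × ℝ)) := {p | dist p.1 p.2 < δ} with hT
  have hTm : MeasurableSet T := measurableSet_lt (by fun_prop) measurable_const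
  set k : (ℝ × ℝ) → (ℝ × ℝ) → ℝ≥0∞ := fun x z => T.indicator 1 (x, z) with hk
  have hkm : Measurable (fun p : (ℝ × ℝ) × (ℝ × ℝ) => k p.1 p.2) :=
    measurable_one.indicator hTm
  set g : ℝ × ℝ → ℝ≥0∞ := fun x => μ (Metric.ball x δ) with hg
  have hgk : ∀ x, g x = ∫⁻ z, k x z ∂μ := by
    intro x
    rw [hg]
    simp only
    rw [← lintegral_indicator_one measurableSet_ball]
    refine lintegral_congr fun z => ?_
    simp [hk, hT, Set.indicator, dist_comm]
  have hgm : Measurable g := by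
    have : g = fun x => ∫⁻ z, k x z ∂μ := funext hgk
    rw [this]
    exact hkm.lintegral_prod_right'
  set κ : ℝ≥0∞ := volume (Metric.ball (0 : ℝ × ℝ) δ) with hκ
  have hκ0 : κ ≠ 0 := (Metric.measure_ball_pos _ _ hδ).ne'
  have hκT : κ ≠ ⊤ := measure_ball_lt_top.ne
  have hκz : ∀ z, volume (Metric.ball (z : ℝ × ℝ) δ) = κ := fun z =>
    Measure.addHaar_ball_center _ _ _
  have hkz : ∀ z, ∫⁻ x, k x z = κ := by
    intro z
    rw [← hκz z, ← lintegral_indicator_one measurableSet_ball]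
    refine lintegral_congr fun x => ?_
    simp [hk, hT, Set.indicator]
  have hg1 : ∫⁻ x, g x = κ := by
    simp_rw [hgk]
    rw [lintegral_lintegral_swap hkm.aemeasurable]
    simp [hkz]
  have hg2 : ∫⁻ x, ENNReal.ofReal (l1 x) * g x ≤ κ * (cost μ + δ') := by
    have : ∀ x, ENNReal.ofReal (l1 x) * g x = ∫⁻ z, ENNReal.ofReal (l1 x) * k x z ∂μ := by
      intro x
      rw [lintegral_const_mul' _ _ ENNReal.ofReal_ne_top, hgk]
    simp_rw [this]
    rw [lintegral_lintegral_swap (by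
      have := measurable_l1
      apply Measurable.aemeasurable
      exact (this.comp measurable_fst).ennreal_ofReal.mul hkm)]
    have h2 : ∀ z, ∫⁻ x, ENNReal.ofReal (l1 x) * k x z ≤ κ * (ENNReal.ofReal (l1 z) + δ') := by
      intro z
      rw [← hkz z, mul_comm, ← lintegral_const_mul' _ _ (by finiteness)]
      refine lintegral_mono fun x => ?_
      simp only [hk, Set.indicator]
      split_ifs with hx
      · simp only [Pi.one_apply, mul_one]
        have hx : dist x z < δ := hx
        rw [Prod.dist_eq, max_lt_iff, Real.dist_eq, Real.dist_eq] at hx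
        have hl : l1 x ≤ l1 z + δ' := by
          unfold l1
          have h3 := abs_sub_abs_le_abs_sub x.1 z.1
          have h4 := abs_sub_abs_le_abs_sub x.2 z.2
          have : (δ' : ℝ) = 2 * δ := by rw [hδdef]; ring
          linarith [hx.1, hx.2]
        refine (ENNReal.ofReal_le_ofReal hl).trans (ENNReal.ofReal_add_le.trans ?_)
        simp
      · simp
    refine (lintegral_mono h2).trans ?_
    rw [lintegral_const_mul' _ _ hκT, lintegral_add_right _ measurable_const]
    simp [cost]
  have hgdp : ∀ x t, l1 t ≤ D → ENNReal.ofReal (Real.exp (-ε)) * g x ≤ g (x + t) := by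
    intro x t ht
    have h1 := hμ (Metric.ball x δ) measurableSet_ball t ht
    have h2 : (· + t) '' (Metric.ball x δ) = Metric.ball (x + t) δ := by
      simp
    rw [h2] at h1
    calc _ ≤ ENNReal.ofReal (Real.exp (-ε)) * (ENNReal.ofReal (Real.exp ε) * g (x + t)) := by
          gcongr
      _ = _ := by
          rw [← mul_assoc, ← ENNReal.ofReal_mul (by positivity), ← Real.exp_add]
          simp
  have main : ENNReal.ofReal v * ∫⁻ x, g x ≤ ∫⁻ x, ENNReal.ofReal (l1 x) * g x := by
    rw [hpol g hgm, hpol (fun x => ENNReal.ofReal (l1 x) * g x) (measurable_l1.ennreal_ofReal.mul hgm),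
      ← lintegral_const_mul' _ _ ENNReal.ofReal_ne_top]
    refine lintegral_mono fun θ => ?_
    have hl1 : ∀ r, l1 (r * (u θ).1, r * (u θ).2) = |r| := by
      intro r
      have := hu1 θ
      unfold l1 at this ⊢
      simp only [abs_mul]
      rw [← mul_add, this, mul_one]
    have := ray_ineq' v hv (fun r => g (r * (u θ).1, r * (u θ).2)) (by fun_prop)
      (ray_ineq D v σ (Real.exp (-ε)) hσ hσv hvD (Real.exp_pos _) hA hAB _
        (fun r => measure_ne_top _ _) (by
          intro r r' hr hr' hrr
          have h5 := hgdp (r * (u θ).1, r * (u θ).2) ((r' - r) * (u θ).1, (r' - r) * (u θ).2)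
            (by rw [hl1, abs_sub_comm]; exact hrr)
          convert h5 using 2
          ext <;> simp <;> ring))
    refine this.trans (le_of_eq ?_)
    refine setLIntegral_congr_fun measurableSet_Ioi fun r hr => ?_
    have hr : 0 < r := hr
    simp only [hl1, abs_of_pos hr]
  rw [hg1, mul_comm] at main
  exact (ENNReal.mul_le_mul_iff_right hκ0 hκT).1 (main.trans hg2)

/-- The staircase profile. -/
def stair (ε D γ r : ℝ) : ℝ := Real.exp (-(ε * (⌈(r - γ) / D⌉₊ : ℝ)))

lemma measurable_stair (ε D γ : ℝ) : Measurable (stair ε D γ) := by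
  unfold stair
  have : Measurable fun r : ℝ => ⌈(r - γ) / D⌉₊ := Nat.measurable_ceil.comp (by fun_prop)
  have h2 : Measurable fun r : ℝ => (⌈(r - γ) / D⌉₊ : ℝ) := (measurable_from_nat).comp this
  fun_prop

lemma stair_dp (ε D γ r r' : ℝ) (hε : 0 ≤ ε) (hD : 0 < D) (h : r' ≤ r + D) :
    stair ε D γ r ≤ Real.exp ε * stair ε D γ r' := by
  unfold stair
  rw [← Real.exp_add, Real.exp_le_exp]
  have : ⌈(r' - γ) / D⌉₊ ≤ ⌈(r - γ) / D⌉₊ + 1 := by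
    rw [Nat.ceil_le]
    push_cast
    have h1 := Nat.le_ceil ((r - γ) / D)
    have : (r' - γ) / D ≤ (r - γ) / D + 1 := by
      rw [div_add_one hD.ne']
      gcongr
      linarith
    linarith
  have : (⌈(r' - γ) / D⌉₊ : ℝ) ≤ ⌈(r - γ) / D⌉₊ + 1 := by exact_mod_cast this
  nlinarith

lemma stair_one (ε D γ r : ℝ) (hD : 0 < D) (h : r ≤ γ) : stair ε D γ r = 1 := by
  have : ⌈(r - γ) / D⌉₊ = 0 := by
    rw [Nat.ceil_eq_zero]
    exact div_nonpos_of_nonpos_of_nonneg (by linarith) hD.le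
  simp [stair, this]

lemma stair_two (ε D γ r : ℝ) (hD : 0 < D) (h : γ < r) (h' : r ≤ γ + D) :
    stair ε D γ r = Real.exp (-ε) := by
  have : ⌈(r - γ) / D⌉₊ = 1 := by
    rw [Nat.ceil_eq_iff one_ne_zero]
    constructor
    · simp; exact div_pos (by linarith) hD
    · rw [div_le_iff₀ hD]; push_cast; linarith
  simp [stair, this]

lemma stair_tail (ε D γ r : ℝ) (hε : 1 ≤ ε) (hD : 0 < D) (hγ : γ ≤ D) (h : γ + D < r) :
    stair ε D γ r ≤ Real.exp (-ε) ^ 2 * (Real.exp 3 * Real.exp (-(1 / D) * r)) := by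
  have h1 := Nat.le_ceil ((r - γ) / D)
  have h2 : 2 ≤ ⌈(r - γ) / D⌉₊ := by
    have : 1 < ⌈(r - γ) / D⌉₊ := by
      rw [Nat.lt_ceil, lt_div_iff₀ hD]; push_cast; linarith
    omega
  have h2' : (2:ℝ) ≤ ⌈(r - γ) / D⌉₊ := by exact_mod_cast h2
  have h3 : r / D - 1 ≤ (r - γ) / D := by
    rw [sub_div]
    have : γ / D ≤ 1 := (div_le_one hD).2 hγ
    linarith
  unfold stair
  rw [← Real.exp_nat_mul, ← Real.exp_add, ← Real.exp_add, Real.exp_le_exp]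
  push_cast
  have : -(1 / D) * r = - (r / D) := by ring
  rw [this]
  nlinarith

lemma Vstar_upper (D : ℝ) (hD : 0 < D) : ∃ C : ℝ, 0 ≤ C ∧ ∀ ε γ : ℝ, 1 ≤ ε → 0 < γ → γ ≤ D →
    Vstar D ε ≤ ENNReal.ofReal (((γ^3 + Real.exp (-ε) * ((γ+D)^3 - γ^3))/3 + Real.exp (-ε)^2 * C) /
      ((γ^2 + Real.exp (-ε) * ((γ+D)^2 - γ^2))/2)) := by
  have hint : IntegrableOn (fun r : ℝ => r^2 * (Real.exp 3 * Real.exp (-(1/D) * r))) (Set.Ioi 0) := by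
    have := integrableOn_rpow_mul_exp_neg_mul_rpow (p := 1) (s := 2) (b := 1/D) (by norm_num) (by norm_num) (by positivity)
    have h2 : IntegrableOn (fun x : ℝ => Real.exp 3 * (x ^ (2:ℝ) * Real.exp (-(1 / D) * x ^ (1:ℝ)))) (Set.Ioi 0) := this.const_mul (Real.exp 3)
    refine h2.congr_fun (fun r hr => ?_) measurableSet_Ioi
    simp only [Real.rpow_one, Real.rpow_two]
    ring
  set C : ℝ := ∫ r in Set.Ioi (0:ℝ), r^2 * (Real.exp 3 * Real.exp (-(1/D) * r)) with hC
  have hC0 : 0 ≤ C := setIntegral_nonneg measurableSet_Ioi fun r _ => by positivity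
  refine ⟨C, hC0, ?_⟩
  intro ε γ hε hγ hγD
  obtain ⟨ν, u, hum, hu1, hν0, hνT, hpol⟩ := l1polar
  set φ : ℝ → ℝ≥0∞ := fun r => ENNReal.ofReal (stair ε D γ r) with hφ
  have hφm : Measurable φ := (measurable_stair ε D γ).ennreal_ofReal
  have hf : Measurable fun x : ℝ × ℝ => φ (l1 x) := hφm.comp measurable_l1
  have hl1 : ∀ θ r, 0 < r → l1 (r * (u θ).1, r * (u θ).2) = r := by
    intro θ r hr
    have := hu1 θ
    unfold l1 at this ⊢
    simp only [abs_mul]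
    rw [← mul_add, this, mul_one, abs_of_pos hr]
  have hrad : ∀ G : ℝ → ℝ≥0∞, Measurable G →
      ∫⁻ x, G (l1 x) = (∫⁻ r in Set.Ioi (0:ℝ), ENNReal.ofReal r * G r) * ν Set.univ := by
    intro G hG
    rw [hpol (fun x => G (l1 x)) (hG.comp measurable_l1), ← lintegral_const]
    refine lintegral_congr fun θ => ?_
    refine setLIntegral_congr_fun measurableSet_Ioi fun r hr => ?_
    rw [hl1 θ r hr]
  set M : ℝ≥0∞ := ∫⁻ r in Set.Ioi (0:ℝ), ENNReal.ofReal r * φ r with hM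
  set K : ℝ≥0∞ := ∫⁻ r in Set.Ioi (0:ℝ), ENNReal.ofReal r * (ENNReal.ofReal r * φ r) with hK
  have hb : 0 < Real.exp (-ε) := Real.exp_pos _
  set b := Real.exp (-ε) with hbdef
  set m : ℝ := (γ^2 + b * ((γ+D)^2 - γ^2))/2 with hm
  set c : ℝ := (γ^3 + b * ((γ+D)^3 - γ^3))/3 + b^2 * C with hc
  have hm0 : 0 < m := by
    have : (γ+D)^2 - γ^2 = D * (2 * γ + D) := by ring
    rw [hm, this]; positivity
  have hc0 : 0 ≤ c := by
    have : (γ+D)^3 - γ^3 = D * (3 * γ^2 + 3 * γ * D + D^2) := by ring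
    rw [hc, this]; positivity
  have hsplit : Set.Ioi (0:ℝ) = Set.Ioc 0 γ ∪ (Set.Ioc γ (γ+D) ∪ Set.Ioi (γ+D)) := by
    rw [Set.Ioc_union_Ioi_eq_Ioi (by linarith), Set.Ioc_union_Ioi_eq_Ioi (by linarith)]
  have hMm : ENNReal.ofReal m ≤ M := by
    have hsub : Set.Ioc 0 γ ∪ Set.Ioc γ (γ+D) ⊆ Set.Ioi 0 := by
      intro r hr
      simp only [Set.mem_union, Set.mem_Ioc, Set.mem_Ioi] at hr ⊢
      rcases hr with hr | hr <;> linarith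
    refine le_trans ?_ (lintegral_mono_set hsub)
    rw [lintegral_union measurableSet_Ioc (Set.Ioc_disjoint_Ioc_of_le le_rfl)]
    have e1 : ∫⁻ r in Set.Ioc 0 γ, ENNReal.ofReal r * φ r = ENNReal.ofReal (γ^2/2) := by
      rw [setLIntegral_congr_fun (g := fun r => ENNReal.ofReal r) measurableSet_Ioc,
        lint_poly _ (by fun_prop) _ _ hγ.le (fun x hx => hx.1.le)]
      · congr 1; simp
      · intro r hr
        simp [hφ, stair_one ε D γ r hD hr.2]
    have e2 : ∫⁻ r in Set.Ioc γ (γ+D), ENNReal.ofReal r * φ r =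
        ENNReal.ofReal (b * ((γ+D)^2 - γ^2)/2) := by
      rw [setLIntegral_congr_fun (g := fun r => ENNReal.ofReal (b * r)) measurableSet_Ioc,
        lint_poly _ (by fun_prop) _ _ (by linarith)
          (fun x hx => mul_nonneg hb.le (hγ.le.trans hx.1.le))]
      · congr 1
        rw [intervalIntegral.integral_const_mul]; simp; ring
      · intro r hr
        simp only [hφ]
        rw [stair_two ε D γ r hD hr.1 hr.2, mul_comm, ENNReal.ofReal_mul hb.le]
    rw [e1, e2, ← ENNReal.ofReal_add (by positivity)
      (by nlinarith [mul_pos hb (mul_pos hD hD), mul_pos hb (mul_pos hγ hD)])]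
    apply ENNReal.ofReal_le_ofReal
    rw [hm]; apply le_of_eq; ring
  have hKc : K ≤ ENNReal.ofReal c := by
    rw [hK, hsplit]
    have e1 : ∫⁻ r in Set.Ioc 0 γ, ENNReal.ofReal r * (ENNReal.ofReal r * φ r) =
        ENNReal.ofReal (γ^3/3) := by
      rw [setLIntegral_congr_fun (g := fun r => ENNReal.ofReal (r^2)) measurableSet_Ioc,
        lint_poly _ (by fun_prop) _ _ hγ.le (fun x hx => by positivity)]
      · congr 1; simp; ring
      · intro r hr
        simp only [hφ]
        rw [stair_one ε D γ r hD hr.2, pow_two, ENNReal.ofReal_mul hr.1.le]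
        simp
    have e2 : ∫⁻ r in Set.Ioc γ (γ+D), ENNReal.ofReal r * (ENNReal.ofReal r * φ r) =
        ENNReal.ofReal (b * ((γ+D)^3 - γ^3)/3) := by
      rw [setLIntegral_congr_fun (g := fun r => ENNReal.ofReal (b * r^2)) measurableSet_Ioc,
        lint_poly _ (by fun_prop) _ _ (by linarith)
          (fun x hx => by positivity)]
      · congr 1
        rw [intervalIntegral.integral_const_mul]; simp; ring
      · intro r hr
        have hr0 : 0 ≤ r := hγ.le.trans hr.1.le
        simp only [hφ]
        rw [stair_two ε D γ r hD hr.1 hr.2, ← ENNReal.ofReal_mul hr0, ← ENNReal.ofReal_mul hr0]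
        congr 1; ring
    have e3 : ∫⁻ r in Set.Ioi (γ+D), ENNReal.ofReal r * (ENNReal.ofReal r * φ r) ≤
        ENNReal.ofReal (b^2 * C) := by
      rw [hC, ← integral_const_mul, ofReal_integral_eq_lintegral_ofReal (hint.const_mul _)
        (Eventually.of_forall fun r => by positivity)]
      refine le_trans ?_ (lintegral_mono_set (s := Set.Ioi (γ+D)) (t := Set.Ioi 0)
        (Set.Ioi_subset_Ioi (by linarith)))
      refine setLIntegral_mono' measurableSet_Ioi fun r hr => ?_
      have hr' : γ + D < r := hr
      have hr0 : 0 ≤ r := by linarith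
      simp only [hφ]
      rw [← ENNReal.ofReal_mul hr0, ← ENNReal.ofReal_mul hr0]
      apply ENNReal.ofReal_le_ofReal
      have := stair_tail ε D γ r hε hD hγD hr'
      calc r * (r * stair ε D γ r) ≤ r * (r * (Real.exp (-ε) ^ 2 * (Real.exp 3 * Real.exp (-(1 / D) * r)))) := by
            gcongr
        _ = _ := by ring
    refine (lintegral_union_le _ _ _).trans ((add_le_add le_rfl (lintegral_union_le _ _ _)).trans ?_)
    rw [e1, e2]
    have n2 : 0 ≤ b * ((γ+D)^3 - γ^3)/3 := by
      have : (γ+D)^3 - γ^3 = D * (3 * γ^2 + 3 * γ * D + D^2) := by ring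
      rw [this]; positivity
    refine (add_le_add le_rfl (add_le_add le_rfl e3)).trans ?_
    rw [← ENNReal.ofReal_add n2 (by positivity), ← ENNReal.ofReal_add (by positivity) (by positivity)]
    apply ENNReal.ofReal_le_ofReal
    rw [hc]; apply le_of_eq; ring
  have hM0 : M ≠ 0 := by
    intro h
    rw [h] at hMm
    simp at hMm; linarith
  have hMT : M ≠ ⊤ := by
    -- on the complement of a bounded interval the first moment dominates
    have h1 : M ≤ ENNReal.ofReal (γ^2/2) + ENNReal.ofReal γ⁻¹ * K := by
      rw [hM]
      have : Set.Ioi (0:ℝ) = Set.Ioc 0 γ ∪ Set.Ioi γ := by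
        rw [Set.Ioc_union_Ioi_eq_Ioi (by linarith)]
      rw [this]
      refine (lintegral_union_le _ _ _).trans (add_le_add ?_ ?_)
      · rw [setLIntegral_congr_fun (g := fun r => ENNReal.ofReal r) measurableSet_Ioc,
          lint_poly _ (by fun_prop) _ _ hγ.le (fun x hx => hx.1.le)]
        · apply le_of_eq; congr 1; simp
        · intro r hr
          simp [hφ, stair_one ε D γ r hD hr.2]
      · rw [hK, ← lintegral_const_mul' _ _ ENNReal.ofReal_ne_top]
        refine le_trans ?_ (lintegral_mono_set (s := Set.Ioi γ) (t := Set.Ioi 0)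
          (Set.Ioi_subset_Ioi (by linarith)))
        refine setLIntegral_mono' measurableSet_Ioi fun r hr => ?_
        have hr' : γ < r := hr
        have hγi : 0 ≤ γ⁻¹ := by positivity
        rw [← mul_assoc, ← ENNReal.ofReal_mul hγi]
        refine le_mul_of_one_le_left zero_le ?_
        rw [ENNReal.one_le_ofReal, ← div_eq_inv_mul, one_le_div hγ]
        exact hr'.le
    refine ne_top_of_le_ne_top ?_ h1
    have : K ≠ ⊤ := ne_top_of_le_ne_top ENNReal.ofReal_ne_top hKc
    finiteness
  -- the measure
  set μ0 : Measure (ℝ × ℝ) := volume.withDensity (fun x => φ (l1 x)) with hμ0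
  have hmass : μ0 Set.univ = M * ν Set.univ := by
    rw [hμ0, withDensity_apply _ MeasurableSet.univ, Measure.restrict_univ, hrad φ hφm]
  have hcost : cost μ0 = K * ν Set.univ := by
    unfold cost
    rw [hμ0, lintegral_withDensity_eq_lintegral_mul _ hf measurable_l1.ennreal_ofReal]
    have := hrad (fun r => ENNReal.ofReal r * φ r) (by fun_prop)
    rw [hK, ← this]
    refine lintegral_congr fun x => ?_
    simp [mul_comm]
  have hdp : DPC ε D μ0 := by
    intro S hS t ht
    have himg : (· + t) '' S = (fun x => x - t) ⁻¹' S := by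
      ext x
      simp only [Set.mem_image, Set.mem_preimage]
      constructor
      · rintro ⟨y, hy, rfl⟩; simpa using hy
      · intro h; exact ⟨x - t, h, by simp⟩
    have hmS : MeasurableSet ((· + t) '' S) := by
      rw [himg]; exact measurable_sub_const t hS
    rw [hμ0, withDensity_apply _ hS, withDensity_apply _ hmS]
    have hsh : ∫⁻ x in (· + t) '' S, φ (l1 x) = ∫⁻ x in S, φ (l1 (x + t)) := by
      rw [← lintegral_indicator hmS, ← lintegral_indicator hS,
        ← lintegral_add_right_eq_self _ t]
      refine lintegral_congr fun x => ?_
      have : x + t ∈ (· + t) '' S ↔ x ∈ S := by rw [himg]; simp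
      by_cases hx : x ∈ S
      · rw [Set.indicator_of_mem (this.2 hx), Set.indicator_of_mem hx]
      · rw [Set.indicator_of_notMem (fun h => hx (this.1 h)), Set.indicator_of_notMem hx]
    rw [hsh, ← lintegral_const_mul' _ _ ENNReal.ofReal_ne_top]
    refine lintegral_mono fun x => ?_
    simp only [hφ]
    rw [← ENNReal.ofReal_mul (by positivity)]
    apply ENNReal.ofReal_le_ofReal
    apply stair_dp _ _ _ _ _ (by linarith) hD
    unfold l1 at ht ⊢
    have h1 := abs_add_le x.1 t.1
    have h2 := abs_add_le x.2 t.2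
    simp only [Prod.fst_add, Prod.snd_add]
    linarith
  have hZ0 : M * ν Set.univ ≠ 0 := mul_ne_zero hM0 hν0
  have hZT : M * ν Set.univ ≠ ⊤ := ENNReal.mul_ne_top hMT hνT
  set μ : Measure (ℝ × ℝ) := (M * ν Set.univ)⁻¹ • μ0 with hμ
  have hprob : IsProbabilityMeasure μ := ⟨by
    rw [hμ, Measure.smul_apply, smul_eq_mul, hmass, ENNReal.inv_mul_cancel hZ0 hZT]⟩
  have hdp' : DPC ε D μ := by
    intro S hS t ht
    rw [hμ, Measure.smul_apply, Measure.smul_apply, smul_eq_mul, smul_eq_mul, mul_left_comm]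
    gcongr
    exact hdp S hS t ht
  have hle : Vstar D ε ≤ cost μ := iInf₂_le μ ⟨hprob, hdp'⟩
  refine hle.trans ?_
  have : cost μ = (M * ν Set.univ)⁻¹ * cost μ0 := by
    unfold cost
    rw [hμ, lintegral_smul_measure, smul_eq_mul]
  rw [this, hcost, ENNReal.mul_inv (Or.inr hνT) (Or.inr hν0)]
  have h5 : M⁻¹ * (ν Set.univ)⁻¹ * (K * ν Set.univ) = K / M := by
    rw [show M⁻¹ * (ν Set.univ)⁻¹ * (K * ν Set.univ) = K * M⁻¹ * ((ν Set.univ)⁻¹ * ν Set.univ) by ring,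
      ENNReal.inv_mul_cancel hν0 hνT, mul_one, div_eq_mul_inv]
  rw [h5, ENNReal.ofReal_div_of_pos hm0]
  exact ENNReal.div_le_div hKc hMm

lemma small_conditions (c : ℝ) (hc3 : c^3 = 2) (hc1 : 1 < c) :
    ∀ᶠ τ in 𝓝[>] (0:ℝ), ∃ x : ℝ, x = c + τ^2 * (c^2/2 - 4*τ) ∧ 2 * τ ≤ x ∧ τ^2 * x ≤ 1 ∧
      x^3/6 - 2*τ^2*x + 8*τ^3/3 ≤ (1-τ^2*x)^3/3 + τ^2*x*(1-τ^2*x)^2/2 ∧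
      x^3/6 ≤ (1-2*τ^3)^3/3 + τ^2*x*(1-2*τ^3)^2/2 := by
  have ev : ∀ f : ℝ → ℝ, Continuous f → 0 < f 0 → ∀ᶠ τ in 𝓝[>] (0:ℝ), 0 < f τ := by
    intro f hf h0
    exact (nhdsWithin_le_nhds : 𝓝[>] (0:ℝ) ≤ 𝓝 0) ((hf.tendsto 0).eventually_const_lt h0)
  have e1 := ev (fun τ => c + τ^2 * (c^2/2 - 4*τ) - 2 * τ) (by fun_prop) (by simp; linarith)
  have e2 := ev (fun τ => 1 - τ^2 * (c + τ^2 * (c^2/2 - 4*τ))) (by fun_prop) (by simp)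
  have e3 := ev (fun τ => -3*c + 12*c^2*τ - 3*c*τ^2*(c^2/2 - 4*τ)^2 - τ^4*(c^2/2 - 4*τ)^3
    + 9*(c + τ^2 * (c^2/2 - 4*τ)) + τ^4*(c + τ^2 * (c^2/2 - 4*τ))^3 - 16*τ) (by fun_prop)
    (by simp; linarith)
  have e4 := ev (fun τ => -12 + 24*τ^3 - 16*τ^6 + 3*c*(-4*τ^2+4*τ^5) +
    3*τ*(c^2/2 - 4*τ)*(1-2*τ^3)^2 + 12*c^2 - 3*c*τ*(c^2/2 - 4*τ)^2 - τ^3*(c^2/2 - 4*τ)^3) (by fun_prop)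
    (by
      have : 1 < c^2 := by nlinarith
      norm_num only [zero_pow, mul_zero]
      linarith)
  filter_upwards [e1, e2, e3, e4, self_mem_nhdsWithin] with τ h1 h2 h3 h4 hτ
  have hτ : 0 < τ := hτ
  refine ⟨_, rfl, by linarith, by linarith, ?_, ?_⟩
  · have := mul_pos (pow_pos hτ 2) h3
    rw [← sub_nonneg]
    have h6 : 0 ≤ (τ^2 * (-3*c + 12*c^2*τ - 3*c*τ^2*(c^2/2 - 4*τ)^2 - τ^4*(c^2/2 - 4*τ)^3
      + 9*(c + τ^2 * (c^2/2 - 4*τ)) + τ^4*(c + τ^2 * (c^2/2 - 4*τ))^3 - 16*τ)) / 6 := by linarith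
    refine h6.trans (le_of_eq ?_)
    linear_combination (1/6 * (1 + 3/2*c*τ^2)) * hc3
  · have := mul_pos (pow_pos hτ 3) h4
    rw [← sub_nonneg]
    have h6 : 0 ≤ (τ^3 * (-12 + 24*τ^3 - 16*τ^6 + 3*c*(-4*τ^2+4*τ^5) +
      3*τ*(c^2/2 - 4*τ)*(1-2*τ^3)^2 + 12*c^2 - 3*c*τ*(c^2/2 - 4*τ)^2 - τ^3*(c^2/2 - 4*τ)^3)) / 6 := by
      linarith
    refine h6.trans (le_of_eq ?_)
    linear_combination (1/6 * (1 + 3/2*c*τ^2)) * hc3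

lemma second_limit (Δ : ℝ) (hΔ : 0 < Δ) : Tendsto (fun ε : ℝ =>
        Real.exp (2 * ε / 3) *
          ((Vstar Δ ε).toReal - (2 : ℝ) ^ ((1 : ℝ) / 3) * Δ * Real.exp (-ε / 3)))
      atTop (nhds (Δ / (2 : ℝ) ^ ((1 : ℝ) / 3))) := by
  set c : ℝ := (2 : ℝ) ^ ((1 : ℝ) / 3) with hc
  have hc3 : c^3 = 2 := by
    rw [hc, ← Real.rpow_natCast, ← Real.rpow_mul (by norm_num)]
    norm_num
  have hc1 : 1 < c := Real.one_lt_rpow (by norm_num) (by norm_num)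
  have hc0 : 0 < c := by linarith
  obtain ⟨C, hC0, hup⟩ := Vstar_upper Δ hΔ
  set t : ℝ → ℝ := fun ε => Real.exp (-ε/6) with ht
  have htt : Tendsto t atTop (𝓝 0) := by
    apply Real.tendsto_exp_atBot.comp
    have : (fun ε : ℝ => -ε/6) = fun ε => -(ε/6) := by ext; ring
    rw [this]
    exact tendsto_neg_atTop_atBot.comp (tendsto_id.atTop_div_const (by norm_num))
  have htt' : Tendsto t atTop (𝓝[>] 0) :=
    tendsto_nhdsWithin_iff.2 ⟨htt, Eventually.of_forall fun ε => Real.exp_pos _⟩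
  have q1 : ∀ ε, Real.exp (-ε) = t ε ^ 6 := by
    intro ε; rw [ht]; simp only; rw [← Real.exp_nat_mul]; congr 1; push_cast; ring
  have q2 : ∀ ε, Real.exp (-ε/3) = t ε ^ 2 := by
    intro ε; rw [ht]; simp only; rw [← Real.exp_nat_mul]; congr 1; push_cast; ring
  have q3 : ∀ ε, Real.exp (2*ε/3) = (t ε ^ 4)⁻¹ := by
    intro ε; rw [ht]; simp only; rw [← Real.exp_nat_mul, ← Real.exp_neg]; congr 1; push_cast; ring
  have hlow : Tendsto (fun ε => Δ * (c^2/2 - 4 * t ε)) atTop (𝓝 (Δ / c)) := by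
    have : Continuous fun τ : ℝ => Δ * (c^2/2 - 4 * τ) := by fun_prop
    have h2 := (this.tendsto 0).comp htt
    have h3 : Δ * (c^2/2 - 4 * 0) = Δ / c := by
      field_simp
      linear_combination hc3
    rw [h3] at h2
    exact h2
  have hhigh : Tendsto (fun ε => Δ * (c + 2 * (C / Δ^3) * t ε ^ 4) / (c^2 + t ε ^ 2 + 2 * c * t ε ^ 4))
      atTop (𝓝 (Δ / c)) := by
    have : ContinuousAt (fun τ : ℝ => Δ * (c + 2 * (C / Δ^3) * τ ^ 4) / (c^2 + τ ^ 2 + 2 * c * τ ^ 4)) 0 := by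
      apply ContinuousAt.div (by fun_prop) (by fun_prop)
      simp; positivity
    have h2 := this.tendsto.comp htt
    have h3 : Δ * (c + 2 * (C / Δ^3) * 0 ^ 4) / (c^2 + 0 ^ 2 + 2 * c * 0 ^ 4) = Δ / c := by
      norm_num
      field_simp
    rw [h3] at h2
    exact h2
  have hupper : ∀ᶠ ε in atTop, Vstar Δ ε ≤ ENNReal.ofReal
      (Δ * t ε ^ 2 * c + t ε ^ 4 *
        (Δ * (c + 2 * (C / Δ^3) * t ε ^ 4) / (c^2 + t ε ^ 2 + 2 * c * t ε ^ 4))) := by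
    have hs : ∀ᶠ ε in atTop, c * t ε ^ 2 < 1 := by
      have : Continuous fun τ : ℝ => c * τ ^ 2 := by fun_prop
      have h2 := (this.tendsto 0).comp htt
      simp only [ne_eq, OfNat.ofNat_ne_zero, not_false_eq_true, zero_pow, mul_zero] at h2
      exact h2.eventually_lt_const one_pos
    filter_upwards [hs, eventually_ge_atTop (1:ℝ)] with ε h1 h2
    have htp : 0 < t ε := Real.exp_pos _
    refine (hup ε (Δ * (c * t ε ^ 2)) h2 (by positivity) (by nlinarith)).trans (le_of_eq ?_)
    rw [q1]
    generalize t ε = τ at *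
    congr 1
    have n1 : ((Δ * (c * τ^2))^2 + τ^6 * ((Δ * (c * τ^2) + Δ)^2 - (Δ * (c * τ^2))^2))/2 =
        Δ^2 * τ^4 * (c^2 + τ^2 + 2*c*τ^4) / 2 := by ring
    have n2 : (((Δ * (c * τ^2))^3 + τ^6 * ((Δ * (c * τ^2) + Δ)^3 - (Δ * (c * τ^2))^3))/3 + (τ^6)^2 * C) =
        Δ^3 * τ^6 * (1 + c * τ^2 + c^2 * τ^4 + τ^6 * (C/Δ^3)) := by
      field_simp
      linear_combination Δ^3 * hc3
    rw [n1, n2]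
    have hpos : 0 < c^2 + τ^2 + 2*c*τ^4 := by positivity
    field_simp
    linear_combination (-Δ^3) * hc3
  have hlower : ∀ᶠ ε in atTop, ENNReal.ofReal
      (Δ * t ε ^ 2 * c + t ε ^ 4 * (Δ * (c^2/2 - 4 * t ε))) ≤ Vstar Δ ε := by
    filter_upwards [htt'.eventually (small_conditions c hc3 hc1)] with ε hx
    have htp : 0 < t ε := Real.exp_pos _
    obtain ⟨x, hx, h1, h2, h3, h4⟩ := hx
    have q1 := q1 ε
    generalize t ε = τ at *
    have : Δ * τ ^ 2 * c + τ ^ 4 * (Δ * (c^2/2 - 4 * τ)) = Δ * τ^2 * x := by rw [hx]; ring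
    rw [this]
    refine le_iInf₂ fun μ hμ => ?_
    have := hμ.1
    refine cost_lower ε Δ (Δ * τ^2 * x) (2 * Δ * τ^3) (by positivity) ?_ ?_ ?_ ?_ μ hμ.2
    · calc 2 * Δ * τ^3 = Δ * τ^2 * (2 * τ) := by ring
        _ ≤ _ := by gcongr
    · calc Δ * τ^2 * x = Δ * (τ^2 * x) := by ring
        _ ≤ Δ * 1 := by gcongr
        _ = Δ := mul_one _
    · rw [q1]
      have := mul_le_mul_of_nonneg_left h3 (by positivity : 0 ≤ Δ^3 * τ^6)
      exact le_trans (le_of_eq (by ring)) (this.trans (le_of_eq (by ring)))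
    · rw [q1]
      have := mul_le_mul_of_nonneg_left h4 (by positivity : 0 ≤ Δ^3 * τ^6)
      exact le_trans (le_of_eq (by ring)) (this.trans (le_of_eq (by ring)))
  have hpos : ∀ᶠ ε in atTop, 0 < Δ * (c^2/2 - 4 * t ε) :=
    hlow.eventually_const_lt (by positivity)
  refine tendsto_of_tendsto_of_tendsto_of_le_of_le' hlow hhigh ?_ ?_
  · filter_upwards [hlower, hupper, hpos] with ε h1 h2 h3
    have hfin : Vstar Δ ε ≠ ⊤ := ne_top_of_le_ne_top ENNReal.ofReal_ne_top h2
    have h4 := (ENNReal.ofReal_le_iff_le_toReal hfin).1 h1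
    have htp : 0 < t ε := Real.exp_pos _
    rw [q2, q3, ← div_eq_inv_mul, le_div_iff₀ (by positivity)]
    linarith
  · filter_upwards [hupper] with ε h2
    have htp : 0 < t ε := Real.exp_pos _
    have h4 := ENNReal.toReal_le_of_le_ofReal (by positivity) h2
    rw [q2, q3, ← div_eq_inv_mul, div_le_iff₀ (by positivity)]
    linarith

/-- Low privacy regime: V*(ε) = 2^{1/3}·Δ·e^{−ε/3} + (Δ/2^{1/3})·e^{−2ε/3} + o(e^{−2ε/3})
as ε → +∞; precisely, e^{ε/3}·V*(ε) → 2^{1/3}·Δ, and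
e^{2ε/3}·(V*(ε) − 2^{1/3}·Δ·e^{−ε/3}) → Δ/2^{1/3}. -/
theorem Vstar_low_privacy (Δ : ℝ) (hΔ : 0 < Δ) :
    Tendsto (fun ε : ℝ => Real.exp (ε / 3) * (Vstar Δ ε).toReal)
      atTop (nhds ((2 : ℝ) ^ ((1 : ℝ) / 3) * Δ)) ∧
    Tendsto (fun ε : ℝ =>
        Real.exp (2 * ε / 3) *
          ((Vstar Δ ε).toReal - (2 : ℝ) ^ ((1 : ℝ) / 3) * Δ * Real.exp (-ε / 3)))
      atTop (nhds (Δ / (2 : ℝ) ^ ((1 : ℝ) / 3))) := by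
  refine ⟨?_, second_limit Δ hΔ⟩
  have h := second_limit Δ hΔ
  have h0 : Tendsto (fun ε : ℝ => Real.exp (-ε/3)) atTop (𝓝 0) := by
    apply Real.tendsto_exp_atBot.comp
    have : (fun ε : ℝ => -ε/3) = fun ε => -(ε/3) := by ext; ring
    rw [this]
    exact tendsto_neg_atTop_atBot.comp (tendsto_id.atTop_div_const (by norm_num))
  have h2 := (h0.mul h).const_add ((2 : ℝ) ^ ((1 : ℝ) / 3) * Δ)
  rw [zero_mul, add_zero] at h2
  refine h2.congr fun ε => ?_
  have r1 : Real.exp (-ε/3) * Real.exp (2*ε/3) = Real.exp (ε/3) := by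
    rw [← Real.exp_add]; congr 1; ring
  have r2 : Real.exp (ε/3) * Real.exp (-ε/3) = 1 := by
    rw [← Real.exp_add, ← Real.exp_zero]; congr 1; ring
  rw [← mul_assoc, r1, mul_sub]
  linear_combination (-((2 : ℝ) ^ ((1 : ℝ) / 3) * Δ)) * r2
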